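/- arXiv:1702.05655 — 9 statements merged into one kernel-verified Lean document; each statement's English description precedes it below -/
import Mathlib

section
/- Let R be a commutative ring, let a, b be elements of R, let n, k, m, p be natural numbers with 1 ≤ k ≤ n, 0 < p ≤ k and n = k·m + p. Let A be the n×n matrix over R (rows and columns indexed by 0,…,n−1) with entries A i j = b if 0 ≤ j − i < k (i.e. i ≤ j and j − i ≤ k − 1) and A i j = a otherwise. Then det A = (b − a)^(n−1) · (b + m • a). -/
/-!
Let `U` be the `0/1` band matrix (the case `a = 0`, `b = 1`); it is upper unitriangular, so
`det U = 1`. Let `x` be the indicator vector of the indices `j` with `k ∣ n - 1 - j`. Every row of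
`U` has its ones on a window of `k` consecutive indices, possibly cut off at `n - 1`, and such a
window contains exactly one of these indices, so `U x` is the all-ones vector
(`bandMatrix_mulVec_bandVec`). Hence `A = U * ((b - a) I + a x 𝟙ᵀ)`, and the second factor is a
rank-one perturbation of a scalar matrix, with determinant `(b - a) ^ (n - 1) * (b - a + a ∑ x)`.
Finally `∑ x = m + 1` is the number of multiples of `k` below `n = k * m + p` (`sum_bandVec`).
-/

/-- The `n × n` band matrix with entry `1` where `0 ≤ j - i < k` and `0` elsewhere. -/
def bandMatrix (R : Type*) [CommRing R] (n k : ℕ) : Matrix (Fin n) (Fin n) R :=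
  Matrix.of fun i j =>
    if (0 : ℤ) ≤ (j : ℤ) - (i : ℤ) ∧ (j : ℤ) - (i : ℤ) < (k : ℤ) then 1 else 0

/-- The indicator vector of the indices whose distance to the last index `n - 1` is a multiple
of `k`. -/
def bandVec (R : Type*) [CommRing R] (n k : ℕ) : Fin n → R :=
  fun j => if k ∣ n - 1 - (j : ℕ) then 1 else 0

lemma det_bandMatrix (R : Type*) [CommRing R] (n k : ℕ) (hk : 1 ≤ k) :
    (bandMatrix R n k).det = 1 := by
  rw [Matrix.det_of_isUpperTriangular]
  · refine Finset.prod_eq_one fun i _ => ?_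
    simp only [bandMatrix, Matrix.of_apply]
    exact if_pos (by omega)
  · intro i j hij
    have hij' : (j : ℕ) < i := hij
    simp only [bandMatrix, Matrix.of_apply]
    exact if_neg (by omega)

lemma bandMatrix_mulVec_bandVec (R : Type*) [CommRing R] (n k : ℕ) (hk : 1 ≤ k) (i : Fin n) :
    ∑ j, bandMatrix R n k i j * bandVec R n k j = 1 := by
  have hi := i.isLt
  have hdm := Nat.div_add_mod (n - 1 - i) k
  have hmod := Nat.mod_lt (n - 1 - i) hk
  set q := (n - 1 - (i : ℕ)) / k with hq
  -- The distance of the unique hit to `n - 1` is the largest multiple of `k` not exceeding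
  -- the distance of `i`.
  rw [Finset.sum_eq_single (⟨n - 1 - k * q, by omega⟩ : Fin n)]
  · simp only [bandMatrix, bandVec, Matrix.of_apply]
    rw [if_pos (by omega), if_pos, one_mul]
    exact ⟨q, by omega⟩
  · intro j _ hj
    have hjn := j.isLt
    simp only [bandMatrix, bandVec, Matrix.of_apply]
    split_ifs with h1 h2
    · exfalso
      obtain ⟨c, hc⟩ := h2
      apply hj
      have hcq : q = c := by
        rw [hq]
        refine Nat.div_eq_of_lt_le ?_ ?_
        · rw [mul_comm]; omega
        · rw [Nat.succ_mul, mul_comm]; omega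
      ext
      simp only
      rw [hcq]
      omega
    all_goals simp
  · simp

lemma sum_bandVec (R : Type*) [CommRing R] (n k m p : ℕ) (hp : 0 < p) (hpk : p ≤ k)
    (hn : n = k * m + p) : ∑ j, bandVec R n k j = (m : R) + 1 := by
  have hk : 0 < k := by omega
  have hset : (Finset.range n).filter (fun d => k ∣ d) =
      (Finset.range (m + 1)).image (fun q => k * q) := by
    ext d
    simp only [Finset.mem_filter, Finset.mem_range, Finset.mem_image]
    constructor
    · rintro ⟨hd, c, rfl⟩
      refine ⟨c, ?_, rfl⟩
      have : k * c < k * (m + 1) := by rw [Nat.mul_succ]; omega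
      exact Nat.lt_of_mul_lt_mul_left this
    · rintro ⟨c, hc, rfl⟩
      have : k * c ≤ k * m := Nat.mul_le_mul_left k (by omega)
      exact ⟨by omega, dvd_mul_right k c⟩
  unfold bandVec
  rw [Fin.sum_univ_eq_sum_range (fun j => if k ∣ n - 1 - j then (1 : R) else 0) n,
    Finset.sum_range_reflect (fun d => if k ∣ d then (1 : R) else 0) n, Finset.sum_boole, hset,
    Finset.card_image_of_injective _ (fun _ _ h => Nat.eq_of_mul_eq_mul_left hk h)]
  simp

/-- Determinant of the generalized binary band matrix with `l = 1`:
the `n × n` Toeplitz matrix whose `(i,j)` entry is `b` when `0 ≤ j - i < k`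
and `a` otherwise, where `n = k * m + p` with `0 < p ≤ k ≤ n`. -/
theorem det_generalized_band_matrix_l_eq_one {R : Type*} [CommRing R] (a b : R)
    (n k m p : ℕ) (hk : 1 ≤ k) (hkn : k ≤ n) (hp : 0 < p) (hpk : p ≤ k)
    (hn : n = k * m + p) :
    (Matrix.of fun i j : Fin n =>
        if (0 : ℤ) ≤ (j : ℤ) - (i : ℤ) ∧ (j : ℤ) - (i : ℤ) < (k : ℤ) then b else a).det
      = (b - a) ^ (n - 1) * (b + m • a) := by
  have hfac : (Matrix.of fun i j : Fin n =>
        if (0 : ℤ) ≤ (j : ℤ) - (i : ℤ) ∧ (j : ℤ) - (i : ℤ) < (k : ℤ) then b else a) =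
      bandMatrix R n k * (Matrix.scalar (Fin n) (b - a) -
        Matrix.vecMulVec (bandVec R n k) (fun _ => -a)) := by
    ext i j
    have h1 : (bandMatrix R n k * Matrix.vecMulVec (bandVec R n k) (fun _ => -a)) i j = -a := by
      simp only [Matrix.mul_apply, Matrix.vecMulVec_apply, ← mul_assoc]
      rw [← Finset.sum_mul, bandMatrix_mulVec_bandVec R n k hk i, one_mul]
    rw [Matrix.mul_sub, Matrix.sub_apply, h1, Matrix.scalar_apply, Matrix.mul_diagonal]
    simp only [bandMatrix, Matrix.of_apply]
    split_ifs <;> ring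
  obtain ⟨N, rfl⟩ : ∃ N, n = N + 1 := ⟨n - 1, by omega⟩
  -- The second factor is the characteristic matrix of a rank-one matrix evaluated at `b - a`.
  rw [hfac, Matrix.det_mul, det_bandMatrix R _ k hk, one_mul, ← Matrix.eval_charpoly,
    Matrix.charpoly_vecMulVec]
  have hdot : bandVec R (N + 1) k ⬝ᵥ (fun _ => -a) = ((m : R) + 1) * -a := by
    rw [dotProduct, ← Finset.sum_mul, sum_bandVec R (N + 1) k m p hp hpk hn]
  rw [hdot]
  simp only [Fintype.card_fin, Polynomial.eval_sub, Polynomial.eval_pow, Polynomial.eval_X,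
    Polynomial.eval_smul, smul_eq_mul, nsmul_eq_mul, Nat.add_sub_cancel]
  ring
end

section
/- Let R be a commutative ring, let a, b be elements of R, and let n, k be natural numbers with n ≥ 1 and 1 ≤ k ≤ n − 1 (for n = 1 the matrix is the 1×1 matrix (a)). Let F be the n×n matrix over R (rows and columns indexed by 0,…,n−1) whose entries are: F i j = b if i < n − 1, j < n − 1 and 0 ≤ j − i < k, and F i j = a otherwise (so the last row and the last column consist entirely of a's). Then det F = (b − a)^(n−1) · a. -/
/-!
Subtracting the last row (all `a`) from every other row, and then the last column from every
other column, leaves an upper triangular matrix: above the last row it has `b - a` on the band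
`0 ≤ j - i < k` and `0` elsewhere, and its last row and column vanish except for the corner `a`.
Since `k ≥ 1`, the diagonal is `b - a` repeated `n - 1` times followed by `a`.
-/

/-- Determinant of the matrix obtained from the `(n-1) × (n-1)` generalized binary band
matrix with `l = 1` (entry `b` when `0 ≤ j - i < k`, entry `a` otherwise) by appending
a last row and last column consisting entirely of the element `a`. -/
theorem det_band_matrix_bordered_by_a {R : Type*} [CommRing R] (a b : R)
    (n k : ℕ) (hn : 1 ≤ n) (hk : 1 ≤ k) (hkn : k ≤ n - 1) :
    (Matrix.of fun i j : Fin n =>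
        if (i : ℕ) < n - 1 ∧ (j : ℕ) < n - 1 ∧
            (0 : ℤ) ≤ (j : ℤ) - (i : ℤ) ∧ (j : ℤ) - (i : ℤ) < (k : ℤ) then b else a).det
      = (b - a) ^ (n - 1) * a := by
  obtain ⟨m, rfl⟩ : ∃ m, n = m + 1 := ⟨n - 1, by omega⟩
  simp only [Nat.add_sub_cancel]
  -- `B`: after the row operations; `C`: after the row and column operations.
  let B : Matrix (Fin (m + 1)) (Fin (m + 1)) R := Matrix.of fun i j =>
    if (i : ℕ) < m then
      if (j : ℕ) < m ∧ (0 : ℤ) ≤ (j : ℤ) - (i : ℤ) ∧ (j : ℤ) - (i : ℤ) < (k : ℤ)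
        then b - a else 0
    else a
  let C : Matrix (Fin (m + 1)) (Fin (m + 1)) R := Matrix.of fun i j =>
    if (i : ℕ) < m then
      if (j : ℕ) < m ∧ (0 : ℤ) ≤ (j : ℤ) - (i : ℤ) ∧ (j : ℤ) - (i : ℤ) < (k : ℤ)
        then b - a else 0
    else if (j : ℕ) < m then 0 else a
  rw [Matrix.det_eq_of_forall_row_eq_smul_add_const (B := B)
    (fun i => if (i : ℕ) < m then 1 else 0) (Fin.last m) (by simp)
    (by
      intro i j
      by_cases hi : (i : ℕ) < m
      · simp only [B, Matrix.of_apply, hi, Fin.val_last, lt_irrefl, true_and, if_true, if_false]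
        split_ifs <;> ring
      · simp [B, hi])]
  rw [← Matrix.det_transpose B, Matrix.det_eq_of_forall_row_eq_smul_add_const
    (B := C.transpose) (fun i => if (i : ℕ) < m then 1 else 0) (Fin.last m) (by simp)
    (by
      intro j i
      by_cases hi : (i : ℕ) < m <;> by_cases hj : (j : ℕ) < m <;> simp [B, C, hi, hj]),
    Matrix.det_transpose]
  have hC : C.BlockTriangular id := by
    intro i j hij
    have h : (j : ℕ) < i := hij
    have hj : (j : ℕ) < m := by omega
    have hneg : ¬ (0 : ℤ) ≤ (j : ℤ) - (i : ℤ) := by omega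
    simp only [C, Matrix.of_apply, hj, hneg, false_and, and_false, if_true, if_false, ite_self]
  rw [Matrix.det_of_upperTriangular hC, Fin.prod_univ_castSucc]
  have hk0 : 0 < k := hk
  simp [C, hk0]
end

section
/- Let R be a commutative ring, let a, b be elements of R, and let n, k be natural numbers with 1 ≤ k and 2k < n. For any natural number m ≥ 1 let A_m denote the m×m matrix over R with entries (A_m) i j = b if 0 ≤ j − i < k and (A_m) i j = a otherwise. Then det A_n = (b − a)^k · det A_{n−k} + (b − a)^(n−1) · a. -/
/-!
Put `c = b - a`. The band matrix is `A_m = B (c • 1 + a • x 𝟙ᵀ)`, where `B` is the 0/1 band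
matrix (unit upper triangular, so of determinant one) and `x` solves `B x = 𝟙`. The solution is
the indicator of the indices `j` with `k ∣ m - 1 - j`: each row of `B` is the indicator of a window
of `k` consecutive indices, possibly cut off at `m - 1`, and contains exactly one such `j`.
The determinant of a scalar matrix plus a rank-one matrix then gives the closed form
`det A_m = c ^ m + a * c ^ (m - 1) * s_m`, with `s_m` the number of multiples of `k` below `m`
(`det_band`), and the recurrence is `s_{k + m} = 1 + s_m`.
-/

open Matrix Finset

/-- The number of multiples of `k` in `{0, …, m - 1}`, as an element of `R`. -/
def multCount (R : Type*) [CommRing R] (k m : ℕ) : R :=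
  ∑ j ∈ range m, if k ∣ j then 1 else 0

lemma multCount_add (R : Type*) [CommRing R] (k m : ℕ) (hk : 1 ≤ k) :
    multCount R k (k + m) = 1 + multCount R k m := by
  unfold multCount
  rw [sum_range_add]
  congr 1
  · rw [sum_eq_single 0]
    · simp
    · intro j hj hj0
      rw [if_neg]
      intro h
      exact absurd (Nat.le_of_dvd (Nat.pos_of_ne_zero hj0) h) (by simpa using hj)
    · intro h
      simp at h
      omega
  · simp

lemma sum_rev_dvd (R : Type*) [CommRing R] (k m : ℕ) :
    (∑ j : Fin m, if k ∣ (j.rev : ℕ) then (1 : R) else 0) = multCount R k m := by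
  unfold multCount
  rw [← Fin.sum_univ_eq_sum_range (fun j => if k ∣ j then (1 : R) else 0)]
  exact Equiv.sum_comp Fin.revPerm (fun j : Fin m => if k ∣ (j : ℕ) then (1 : R) else 0)

/-- The indicator of `{j | k ∣ m - 1 - j}` solves `B x = 𝟙`: every row window contains exactly one
such `j`. -/
lemma window_sum (R : Type*) [CommRing R] (k m : ℕ) (hk : 1 ≤ k) (i : Fin m) :
    (∑ j : Fin m, (if (i : ℕ) ≤ j ∧ (j : ℕ) < i + k then (1 : R) else 0) *
      (if k ∣ (j.rev : ℕ) then 1 else 0)) = 1 := by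
  have hi := i.isLt
  have hdm := Nat.div_add_mod (m - 1 - i) k
  have hmod := Nat.mod_lt (m - 1 - i) hk
  -- The multiple of `k` in the reflected window is `m - 1 - i` rounded down.
  have hj0 : m - 1 - k * ((m - 1 - i) / k) < m := by omega
  rw [sum_eq_single (⟨m - 1 - k * ((m - 1 - i) / k), hj0⟩ : Fin m)]
  · have hrev : m - (m - 1 - k * ((m - 1 - i) / k) + 1) = k * ((m - 1 - i) / k) := by omega
    simp only [Fin.val_rev, hrev, dvd_mul_right, if_true, mul_one]
    rw [if_pos]
    omega
  · rintro j - hne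
    by_contra h
    have hjm := j.isLt
    simp only [mul_ite, mul_one, mul_zero, Fin.val_rev] at h
    split_ifs at h with h1 h2
    · apply hne
      ext
      obtain ⟨q, hq⟩ := h1
      have : (m - 1 - (i : ℕ)) / k = q := by
        rw [Nat.div_eq_iff (by omega)]
        constructor
        · rw [mul_comm]; omega
        · rw [mul_comm q k]; omega
      simp only [this]
      omega
    · simp at h
    · simp at h
  · simp

lemma det_band_zero_one (R : Type*) [CommRing R] (k m : ℕ) (hk : 1 ≤ k) :
    (Matrix.of fun i j : Fin m =>
      if (i : ℕ) ≤ j ∧ (j : ℕ) < i + k then (1 : R) else 0).det = 1 := by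
  rw [det_of_isUpperTriangular]
  · apply prod_eq_one
    intro i _
    simp only [of_apply]
    rw [if_pos]
    omega
  · intro i j hij
    simp only [of_apply]
    rw [if_neg]
    simp only [id, Fin.lt_def] at hij
    omega

lemma det_scalar_add_vecMulVec {R : Type*} [CommRing R] {m : ℕ} (c : R) (u v : Fin m → R) :
    (scalar (Fin m) c + vecMulVec u v).det = c ^ m + (u ⬝ᵥ v) * c ^ (m - 1) := by
  have h := eval_charpoly (vecMulVec (-u) v) c
  rw [charpoly_vecMulVec] at h
  simp at h
  rw [scalar_apply, ← h]

/-- Closed form of the determinant of the band matrix. -/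
lemma det_band {R : Type*} [CommRing R] (a b : R) (k m : ℕ) (hk : 1 ≤ k) :
    (Matrix.of fun i j : Fin m =>
        if (0 : ℤ) ≤ (j : ℤ) - (i : ℤ) ∧ (j : ℤ) - (i : ℤ) < (k : ℤ) then b else a).det
      = (b - a) ^ m + a * multCount R k m * (b - a) ^ (m - 1) := by
  have hfac : (Matrix.of fun i j : Fin m =>
        if (0 : ℤ) ≤ (j : ℤ) - (i : ℤ) ∧ (j : ℤ) - (i : ℤ) < (k : ℤ) then b else a)
      = (Matrix.of fun i j : Fin m => if (i : ℕ) ≤ j ∧ (j : ℕ) < i + k then (1 : R) else 0) *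
        (scalar (Fin m) (b - a) +
          vecMulVec (fun j : Fin m => if k ∣ (j.rev : ℕ) then (1 : R) else 0) fun _ => a) := by
    ext i j
    have hw : (Matrix.of fun i j : Fin m =>
          if (i : ℕ) ≤ j ∧ (j : ℕ) < i + k then (1 : R) else 0) *ᵥ
        (fun j : Fin m => if k ∣ (j.rev : ℕ) then (1 : R) else 0) = 1 :=
      funext fun i => window_sum R k m hk i
    rw [mul_add, mul_vecMulVec, hw, Matrix.add_apply, scalar_apply, mul_diagonal]
    simp only [of_apply, vecMulVec_apply, Pi.one_apply, one_mul]
    have hiff : ((0 : ℤ) ≤ (j : ℤ) - (i : ℤ) ∧ (j : ℤ) - (i : ℤ) < (k : ℤ)) ↔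
        ((i : ℕ) ≤ j ∧ (j : ℕ) < i + k) := by omega
    simp only [hiff]
    split_ifs <;> ring
  rw [hfac, det_mul, det_band_zero_one R k m hk, det_scalar_add_vecMulVec, one_mul]
  congr 2
  rw [dotProduct, ← sum_mul, sum_rev_dvd, mul_comm]

/-- Recurrence for the determinant of the generalized binary band matrix with `l = 1`
in the case `2k < n`: `det A_n = (b - a)^k * det A_{n-k} + (b - a)^(n-1) * a`, where
`A_m` is the `m × m` Toeplitz matrix whose `(i,j)` entry is `b` when `0 ≤ j - i < k`
and `a` otherwise. -/
theorem det_band_matrix_recurrence {R : Type*} [CommRing R] (a b : R)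
    (n k : ℕ) (hk : 1 ≤ k) (hkn : 2 * k < n) :
    (Matrix.of fun i j : Fin n =>
        if (0 : ℤ) ≤ (j : ℤ) - (i : ℤ) ∧ (j : ℤ) - (i : ℤ) < (k : ℤ) then b else a).det
      = (b - a) ^ k *
          (Matrix.of fun i j : Fin (n - k) =>
            if (0 : ℤ) ≤ (j : ℤ) - (i : ℤ) ∧ (j : ℤ) - (i : ℤ) < (k : ℤ) then b else a).det
        + (b - a) ^ (n - 1) * a := by
  rw [det_band a b k n hk, det_band a b k (n - k) hk]
  obtain ⟨p, rfl⟩ : ∃ p, n = k + (p + 1) := ⟨n - k - 1, by omega⟩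
  have h1 : k + (p + 1) - k = p + 1 := by omega
  have h2 : k + (p + 1) - 1 = k + p := by omega
  rw [h1, h2, multCount_add R k _ hk, Nat.add_sub_cancel]
  ring
end

section
/- Let R be a commutative ring, let a, b be elements of R, and let n, k, l, s be natural numbers with 1 < l ≤ k ≤ n, s ≥ 1 and n = (k + l − 1)·s. Let A be the n×n matrix over R with entries A i j = b if −l < j − i < k (as integers) and A i j = a otherwise. Then det A = (−1)^((k−1)(l−1)s) · (b − a)^(n−1) · (b + (s − 1) • a). -/
/-!
Write `m = k + l - 1` and `c = b - a`. Two consecutive rows `i`, `i + 1` of the band matrix `A`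
differ by `c • (e_{i+1-l} - e_{i+k})`, where out-of-range unit vectors are read as zero, and the two
indices differ by exactly `m`. Hence `A` is multiplied on the left by the unipotent matrix `rowDiff`
(row `i` minus row `i + 1`) and on the right by the unipotent matrix `colSum`, which replaces
column `j` by the sum of the columns `j, j + m, j + 2m, …`. This leaves the determinant unchanged.
Since `n = m * s`, the rows of the product `rowDiff * A * colSum` are as follows:

* for `i < n - k`, row `i` is `-c` in column `i + k` and zero elsewhere;
* for `n - k ≤ i < n - 1`, row `i` is `c` in the columns `≤ i + 1 - l` congruent to `i + k - n`
  modulo `m`, the first of which is `i + k - n` itself;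
* the last row has the entry `b + (s - 1) • a` in column `k - 1`.

After the columns are rotated cyclically by `k` this is a lower triangular matrix, so the
determinant is the sign of the rotation, `(-1) ^ ((n - 1) * k)`, times
`(-c) ^ (n - k) * c ^ (k - 1) * (b + (s - 1) • a)`.
-/

open Matrix Finset

namespace BandDet

/-- The band matrix of the theorem. -/
def band {R : Type*} (a b : R) (n k l : ℕ) : Matrix (Fin n) (Fin n) R :=
  Matrix.of fun i j : Fin n =>
    if -(l : ℤ) < (j : ℤ) - (i : ℤ) ∧ (j : ℤ) - (i : ℤ) < (k : ℤ) then b else a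

/-- Left multiplication by `rowDiff R n` subtracts row `i + 1` from row `i` and keeps the last
row. -/
def rowDiff (R : Type*) [CommRing R] (n : ℕ) : Matrix (Fin n) (Fin n) R :=
  Matrix.of fun i j => (if j = i then 1 else 0) - (if (j : ℕ) = i + 1 then 1 else 0)

/-- Right multiplication by `colSum R n m` replaces column `j` by the sum of the columns
`j, j + m, j + 2m, …`. -/
def colSum (R : Type*) [CommRing R] (n m : ℕ) : Matrix (Fin n) (Fin n) R :=
  Matrix.of fun i j => if (j : ℕ) ≤ i ∧ (i : ℕ) % m = (j : ℕ) % m then 1 else 0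

variable {R : Type*} [CommRing R]

lemma det_rowDiff (n : ℕ) : (rowDiff R n).det = 1 := by
  rw [Matrix.det_of_isUpperTriangular]
  · simp [rowDiff]
  · intro i j hij
    have h : (j : ℕ) < i := hij
    have h1 : j ≠ i := by rintro rfl; omega
    have h2 : (j : ℕ) ≠ i + 1 := by omega
    simp [rowDiff, h1, h2]

lemma det_colSum (n m : ℕ) : (colSum R n m).det = 1 := by
  rw [Matrix.det_of_isLowerTriangular]
  · simp [colSum]
  · intro i j hij
    have h : (i : ℕ) < j := hij
    have h1 : ¬ (j : ℕ) ≤ i := by omega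
    simp only [colSum, Matrix.of_apply, h1, false_and, if_false]

lemma sum_residue (m s r : ℕ) (hr : r < m) (f : ℕ → R) :
    ∑ p ∈ range (m * s), (if p % m = r then f p else 0) = ∑ q ∈ range s, f (m * q + r) := by
  induction s with
  | zero => simp
  | succ s ih =>
    rw [Nat.mul_succ, sum_range_add, ih, sum_range_succ]
    congr 1
    rw [sum_eq_single r]
    · simp [Nat.mod_eq_of_lt hr]
    · intro x hx hxr
      have : x % m = x := Nat.mod_eq_of_lt (by simpa using hx)
      simp [this, hxr]
    · intro h; simp [hr] at h

/-- Among the `m` consecutive integers after `p`, only `p + m` is congruent to `p + m`. -/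
lemma eq_of_window {p m j : ℕ} (h1 : (p + m) % m = j % m) (h2 : p < j) (h3 : j ≤ p + m) :
    j = p + m := by
  have h4 : m ∣ p + m - j := (Nat.modEq_iff_dvd' h3).1 h1.symm
  have := Nat.eq_zero_of_dvd_of_lt h4 (by omega)
  omega

/-- The matrix `rowDiff * band` has the rows `(b - a) • (e_{i+1-l} - e_{i+k})`, apart from the
last one. -/
lemma rowDiff_mul_band (a b : R) {n k l : ℕ} (hl : 1 < l) (hk : 1 < k) (i p : Fin n)
    (hi : (i : ℕ) + 1 < n) :
    (rowDiff R n * band a b n k l) i p =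
      (if (p : ℕ) + l = i + 1 then b - a else 0) - (if (p : ℕ) = i + k then b - a else 0) := by
  have e : ∀ j : Fin n, ((j : ℕ) = i + 1) = (j = ⟨i + 1, hi⟩) := by
    intro j; simp [Fin.ext_iff]
  simp only [Matrix.mul_apply, rowDiff, Matrix.of_apply, sub_mul, ite_mul, one_mul, zero_mul,
    sum_sub_distrib, e, sum_ite_eq', mem_univ, if_true, band]
  push_cast
  split_ifs <;> first | omega | ring

lemma rowDiff_mul_band_last (a b : R) {n k l : ℕ} (i p : Fin n) (hi : (i : ℕ) + 1 = n) :
    (rowDiff R n * band a b n k l) i p = band a b n k l i p := by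
  have e : ∀ j : Fin n, ((j : ℕ) = i + 1) = False := by
    intro j; have := j.2; simp; omega
  simp only [Matrix.mul_apply, rowDiff, Matrix.of_apply, ite_mul, one_mul, zero_mul,
    e, sum_ite_eq', mem_univ, if_true, if_false, sub_zero]

lemma reduced_apply (a b : R) {n k l m : ℕ} (hl : 1 < l) (hk : 1 < k) (i j : Fin n)
    (hi : (i : ℕ) + 1 < n) :
    (rowDiff R n * band a b n k l * colSum R n m) i j =
      (if l ≤ i + 1 ∧ (j : ℕ) ≤ i + 1 - l ∧ ((i : ℕ) + 1 - l) % m = j % m then b - a else 0)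
      - (if (i : ℕ) + k < n ∧ (j : ℕ) ≤ i + k ∧ ((i : ℕ) + k) % m = j % m
          then b - a else 0) := by
  rw [Matrix.mul_apply]
  simp only [rowDiff_mul_band a b hl hk i _ hi, sub_mul, sum_sub_distrib, ite_mul, zero_mul]
  congr 1
  · by_cases h : l ≤ i + 1
    · have e : ∀ p : Fin n, ((p : ℕ) + l = i + 1) = (p = ⟨i + 1 - l, by omega⟩) := by
        intro p; simp only [Fin.ext_iff, eq_iff_iff]; omega
      simp only [e, sum_ite_eq', mem_univ, if_true, colSum, Matrix.of_apply, h, true_and]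
      rw [← sub_mul, mul_ite, mul_one, mul_zero]
    · rw [if_neg (by tauto)]
      refine sum_eq_zero fun p _ => if_neg (by omega)
  · by_cases h : (i : ℕ) + k < n
    · have e : ∀ p : Fin n, ((p : ℕ) = i + k) = (p = ⟨i + k, h⟩) := by
        intro p; simp only [Fin.ext_iff]
      simp only [e, sum_ite_eq', mem_univ, if_true, colSum, Matrix.of_apply, h, true_and]
      rw [← sub_mul, mul_ite, mul_one, mul_zero]
    · rw [if_neg (by tauto)]
      refine sum_eq_zero fun p _ => if_neg (by have := p.2; omega)

lemma reduced_top (a b : R) {n k l m : ℕ} (hl : 1 < l) (hk : 1 < k) (hm : m + 1 = k + l)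
    (i j : Fin n) (hi : (i : ℕ) + k < n) :
    (rowDiff R n * band a b n k l * colSum R n m) i j =
      if (j : ℕ) = i + k then -(b - a) else 0 := by
  rw [reduced_apply a b hl hk i j (by omega)]
  by_cases h : l ≤ i + 1
  · obtain ⟨p, hp⟩ : ∃ p, (i : ℕ) + 1 = p + l := ⟨i + 1 - l, by omega⟩
    have e1 : (i : ℕ) + 1 - l = p := by omega
    have e2 : (i : ℕ) + k = p + m := by omega
    rw [e2] at hi
    rw [e1, e2]
    by_cases hj : (j : ℕ) = p + m
    · rw [hj]
      have : ¬ p + m ≤ p := by omega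
      simp [this, hi]
    · by_cases hjp : (j : ℕ) ≤ p
      · have : (j : ℕ) ≤ p + m := by omega
        simp [h, hj, hi, hjp, this]
      · have : ¬ ((j : ℕ) ≤ p + m ∧ (p + m) % m = j % m) :=
          fun h => hj (eq_of_window h.2 (by omega) h.1)
        simp only [hjp, hj, this, and_false, false_and, if_false, sub_zero]
  · by_cases hj : (j : ℕ) = i + k
    · simp [h, hj, hi]
    · have : ¬ ((j : ℕ) ≤ i + k ∧ ((i : ℕ) + k) % m = j % m) := by
        rintro ⟨h1, h2⟩
        rw [Nat.mod_eq_of_lt (by omega), Nat.mod_eq_of_lt (by omega)] at h2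
        omega
      simp only [h, hj, this, and_false, false_and, if_false, sub_zero]

/-- Only the columns `j < k` matter here: they become the last `k` columns after the rotation. -/
lemma reduced_mid (a b : R) {n k l m t : ℕ} (hl : 1 < l) (hk : 1 < k) (hm : m + 1 = k + l)
    (hn : n = m * t + m) (i j : Fin n) (hi : n ≤ (i : ℕ) + k) (hi' : (i : ℕ) + 1 < n)
    (hj : (j : ℕ) < k) :
    (rowDiff R n * band a b n k l * colSum R n m) i j =
      if (j : ℕ) = i + k - n then b - a else 0 := by
  rw [reduced_apply a b hl hk i j hi']
  have e : (i : ℕ) + 1 - l = (i + k - n) + m * t := by omega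
  have h1 : ((i : ℕ) + k - n) % m = i + k - n := Nat.mod_eq_of_lt (by omega)
  have h2 : (j : ℕ) % m = j := Nat.mod_eq_of_lt (by omega)
  rw [e, Nat.add_mul_mod_self_left, h1, h2]
  split_ifs <;> first | omega | simp

lemma reduced_last (a b : R) {n k l m t : ℕ} (hl : 1 < l) (hk : 1 < k) (hm : m + 1 = k + l)
    (hn : n = m * (t + 1)) (i j : Fin n) (hi : (i : ℕ) + 1 = n) (hj : (j : ℕ) + 1 = k) :
    (rowDiff R n * band a b n k l * colSum R n m) i j = b + t • a := by
  rw [Matrix.mul_apply]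
  simp only [rowDiff_mul_band_last a b i _ hi]
  have key : ∀ p : Fin n, band a b n k l i p * colSum R n m p j =
      (fun p : ℕ => if p % m = k - 1 then (if n ≤ p + l then b else a) else 0) p := by
    intro p
    have h2 : (j : ℕ) % m = k - 1 := by rw [Nat.mod_eq_of_lt (by omega)]; omega
    have h3 := Nat.mod_le (p : ℕ) m
    have h4 := p.2
    simp only [band, colSum, Matrix.of_apply, h2]
    split_ifs <;> first | omega | simp
  rw [sum_congr rfl fun p _ => key p, Fin.sum_univ_eq_sum_range
    (fun p : ℕ => if p % m = k - 1 then (if n ≤ p + l then b else a) else 0) n]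
  rw [hn, sum_residue _ _ _ (by omega), sum_range_succ, add_comm]
  congr 1
  · rw [if_pos]; rw [Nat.mul_succ]; omega
  · rw [sum_congr rfl (g := fun _ => a)]
    · simp
    · intro q hq
      have : q + 1 ≤ t := by simpa using hq
      have := Nat.mul_le_mul_left m this
      rw [if_neg]
      rw [Nat.mul_succ] at *; omega

end BandDet

open BandDet

/-- Determinant of the `n × n` generalized binary band matrix with parameters
`1 < l ≤ k ≤ n` (entry `b` when `-l < j - i < k`, entry `a` otherwise) in the case
`n = (k + l - 1) * s` with `s ≥ 1`. -/
theorem det_band_matrix_case_p_eq_zero {R : Type*} [CommRing R] (a b : R)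
    (n k l s : ℕ) (hl : 1 < l) (hlk : l ≤ k) (hkn : k ≤ n) (hs : 1 ≤ s)
    (hn : n = (k + l - 1) * s) :
    (Matrix.of fun i j : Fin n =>
        if -(l : ℤ) < (j : ℤ) - (i : ℤ) ∧ (j : ℤ) - (i : ℤ) < (k : ℤ) then b else a).det
      = (-1 : R) ^ ((k - 1) * (l - 1) * s) * (b - a) ^ (n - 1) * (b + (s - 1) • a) := by
  change (band a b n k l).det = _
  obtain ⟨t, rfl⟩ : ∃ t, s = t + 1 := ⟨s - 1, by omega⟩
  obtain ⟨m, hm⟩ : ∃ m, m + 1 = k + l := ⟨k + l - 1, by omega⟩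
  have hm' : k + l - 1 = m := by omega
  rw [hm'] at hn
  have hn2 : n = m * t + m := by rw [hn, Nat.mul_succ]
  obtain ⟨q, rfl⟩ : ∃ q, k = q + 1 := ⟨k - 1, by omega⟩
  obtain ⟨r, hr⟩ : ∃ r, n = r + (q + 1) := ⟨n - (q + 1), by omega⟩
  obtain ⟨N, rfl⟩ : ∃ N, n = N + 1 := ⟨n - 1, by omega⟩
  have hkN : q + 1 < N + 1 := by have := Nat.zero_le (m * t); omega
  have hk : 1 < q + 1 := by omega
  set M := rowDiff R (N + 1) * band a b (N + 1) (q + 1) l * colSum R (N + 1) m with hM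
  have hdet : (band a b (N + 1) (q + 1) l).det = M.det := by
    rw [hM, det_mul, det_mul, det_rowDiff, det_colSum, one_mul, mul_one]
  set σ : Equiv.Perm (Fin (N + 1)) := finRotate (N + 1) ^ (q + 1) with hσ
  have hσv : ∀ i, ((σ i : Fin (N + 1)) : ℕ) = (i + (q + 1)) % (N + 1) := by
    have : ∀ c : ℕ, ∀ i, (((finRotate (N + 1) ^ c) i : Fin (N + 1)) : ℕ) = (i + c) % (N + 1) := by
      intro c
      induction c with
      | zero => intro i; simp [Nat.mod_eq_of_lt i.2]
      | succ c ih =>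
        intro i
        rw [pow_succ', Equiv.Perm.mul_apply, finRotate_apply, Fin.val_add, ih]
        simp [Nat.add_assoc]
    exact this (q + 1)
  have hv1 : ∀ i : Fin (N + 1), (i : ℕ) < r → ((σ i : Fin (N + 1)) : ℕ) = i + (q + 1) := by
    intro i hi
    rw [hσv, Nat.mod_eq_of_lt (by omega)]
  have hv2 : ∀ i : Fin (N + 1), r ≤ (i : ℕ) →
      ((σ i : Fin (N + 1)) : ℕ) = i + (q + 1) - (N + 1) := by
    intro i hi
    rw [hσv, Nat.mod_eq_sub_mod (by omega), Nat.mod_eq_of_lt (by omega)]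
  have htri : (M.submatrix id σ).IsLowerTriangular := by
    intro i i' hii
    have h : (i : ℕ) < i' := hii
    have h' := i'.2
    rw [submatrix_apply, id]
    by_cases hi : (i : ℕ) < r
    · rw [hM, reduced_top a b hl hk hm i _ (by omega), if_neg]
      rcases lt_or_ge (i' : ℕ) r with h1 | h1
      · rw [hv1 _ h1]; omega
      · rw [hv2 _ h1]; omega
    · have h1 := hv2 i' (by omega)
      rw [hM, reduced_mid a b hl hk hm hn2 i _ (by omega) (by omega) (by omega), if_neg]
      omega
  have hdiag : ∀ i : Fin (N + 1), M.submatrix id σ i i =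
      (fun x : ℕ => if x < r then -(b - a) else if x < N then b - a else b + t • a) i := by
    intro i
    have h' := i.2
    rw [submatrix_apply, id]
    by_cases hi : (i : ℕ) < r
    · rw [hM, reduced_top a b hl hk hm i _ (by omega), if_pos (hv1 i hi)]
      simp [hi]
    · have h1 := hv2 i (by omega)
      by_cases hi2 : (i : ℕ) < N
      · rw [hM, reduced_mid a b hl hk hm hn2 i _ (by omega) (by omega) (by omega), if_pos h1]
        simp [hi, hi2]
      · rw [hM, reduced_last a b hl hk hm hn i _ (by omega) (by omega)]
        simp [hi, hi2]
  have hprod : (M.submatrix id σ).det = (-(b - a)) ^ r * (b - a) ^ q * (b + t • a) := by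
    rw [det_of_isLowerTriangular _ htri, Finset.prod_congr rfl fun i _ => hdiag i,
      Fin.prod_univ_eq_prod_range
        (fun x : ℕ => if x < r then -(b - a) else if x < N then b - a else b + t • a) (N + 1)]
    have hN : N = r + q := by omega
    rw [prod_range_succ, hN, prod_range_add]
    congr 1
    · congr 1
      · rw [prod_congr rfl (g := fun _ => -(b - a))]
        · simp
        · intro x hx; rw [if_pos (by simpa using hx)]
      · rw [prod_congr rfl (g := fun _ => b - a)]
        · simp
        · intro x hx
          have : x < q := by simpa using hx
          rw [if_neg (by omega), if_pos (by omega)]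
    · simp
  have hsign : ((Equiv.Perm.sign σ : ℤ) : R) = (-1) ^ (N * (q + 1)) := by
    rw [hσ, map_pow, sign_finRotate]
    push_cast
    rw [pow_mul]
  rw [det_permute', hsign] at hprod
  have hsq : ∀ e : ℕ, ((-1 : R) ^ e) * (-1) ^ e = 1 := fun e => by
    rw [← mul_pow]; simp
  have hMd : M.det = (-1) ^ (N * (q + 1)) * ((-(b - a)) ^ r * (b - a) ^ q * (b + t • a)) := by
    rw [← hprod, ← mul_assoc, hsq, one_mul]
  have hNr : N = r + q := by omega
  obtain ⟨u, rfl⟩ : ∃ u, l = u + 1 := ⟨l - 1, by omega⟩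
  -- With `k = q + 1`, `l = u + 1` both exponents of `-1` have the parity of `q * u * s`.
  have hpar : (-1 : R) ^ (N * (q + 1)) * (-1) ^ r = (-1) ^ (q * u * (t + 1)) := by
    rw [← pow_add]
    have hmq : m = q + u + 1 := by omega
    have hNe : N + 1 = (q + u + 1) * (t + 1) := by rw [hn, hmq]
    have hre : r + q + 1 = (q + u + 1) * (t + 1) := by omega
    have hpe : (N * (q + 1) + r) % 2 = (q * u * (t + 1)) % 2 := by
      have : N * (q + 1) + r + 2 * (q + 1) = (q + u + 1) * (t + 1) * (q + 2) := by
        rw [← hNe]; nlinarith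
      have h2 : (q + u + 1) * (t + 1) * (q + 2) =
          q * u * (t + 1) + (q * (q + 1)) * (t + 1) + 2 * ((q + u + 1) * (t + 1)) := by ring
      obtain ⟨w, hw⟩ := (Nat.even_mul_succ_self q)
      have h3 : (q * (q + 1)) * (t + 1) = 2 * (w * (t + 1)) := by
        rw [hw]; ring
      omega
    rw [neg_one_pow_eq_pow_mod_two, hpe, ← neg_one_pow_eq_pow_mod_two]
  rw [hdet, hMd, neg_pow (b - a) r]
  simp only [Nat.add_sub_cancel]
  rw [← hpar, hNr, pow_add (b - a)]
  ring
end

section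
/- Let R be a commutative ring, let a, b be elements of R, and let n, k, l be natural numbers with 1 < l ≤ k ≤ n such that the residue p of n modulo (k + l − 1) satisfies 2 ≤ p < k + l − 1. Let A be the n×n matrix over R with entries A i j = b if −l < j − i < k (as integers) and A i j = a otherwise. Then det A = 0. -/
/-!
Put `m = k + l - 1`, the width of the band, and `n = q * m + p` with `2 ≤ p < m`. An explicit
alternating sum of columns of the matrix vanishes. With `r = p - l` (truncated at `0`), it is
`∑ t ∈ {0, …, q}, (column (r + t * m) - column (r + t * m + 1))`.

Two adjacent columns `c` and `c + 1` differ only in row `c - k + 1`, by `b - a`, and in row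
`c + l`, by `a - b` (where these rows exist). Since `c + l = (c + m) - k + 1`, the contributions of
consecutive `t` cancel, and what is left sits in the rows `r - k + 1 < 0` and `r + q * m + l ≥ n`,
which lie outside the matrix. The resulting kernel vector has an entry equal to `1`, which forces
the determinant to vanish over any commutative ring.
-/

/-- Over a commutative ring with zero divisors a nonzero kernel vector is not enough; an entry
equal to `1` is, since `det A • v = adjugate A * A * v`. -/
theorem det_eq_zero_of_mulVec_eq_zero_of_apply_eq_one {R : Type*} [CommRing R] {n : ℕ}
    (A : Matrix (Fin n) (Fin n) R) (v : Fin n → R) (hv : A.mulVec v = 0) (j : Fin n)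
    (hj : v j = 1) : A.det = 0 := by
  have h : (A.adjugate * A).mulVec v = 0 := by
    rw [← Matrix.mulVec_mulVec, hv, Matrix.mulVec_zero]
  rw [Matrix.adjugate_mul, Matrix.smul_mulVec, Matrix.one_mulVec] at h
  simpa [hj] using congrFun h j

/-- Determinant of the `n × n` generalized binary band matrix with parameters
`1 < l ≤ k ≤ n` (entry `b` when `-l < j - i < k`, entry `a` otherwise) vanishes when
the residue `p` of `n` modulo `k + l - 1` satisfies `2 ≤ p < k + l - 1`. -/
theorem det_band_matrix_case_p_ge_two {R : Type*} [CommRing R] (a b : R)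
    (n k l : ℕ) (hl : 1 < l) (hlk : l ≤ k) (hkn : k ≤ n)
    (hp2 : 2 ≤ n % (k + l - 1)) (hplt : n % (k + l - 1) < k + l - 1) :
    (Matrix.of fun i j : Fin n =>
        if -(l : ℤ) < (j : ℤ) - (i : ℤ) ∧ (j : ℤ) - (i : ℤ) < (k : ℤ) then b else a).det
      = 0 := by
  obtain ⟨m, hm⟩ : ∃ m, m = k + l - 1 := ⟨_, rfl⟩
  rw [← hm] at hp2 hplt
  obtain ⟨p, hp⟩ : ∃ p, p = n % m := ⟨_, rfl⟩
  obtain ⟨q, hq⟩ : ∃ q, q = n / m := ⟨_, rfl⟩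
  have hn : q * m + p = n := by rw [hp, hq]; exact Nat.div_add_mod' n m
  rw [← hp] at hp2 hplt
  obtain ⟨r, hr⟩ : ∃ r, r = p - l := ⟨_, rfl⟩
  have hc (t : Fin (q + 1)) : r + t * m + 1 < n := by
    have : (t : ℕ) * m ≤ q * m := Nat.mul_le_mul_right m (Nat.lt_succ_iff.mp t.2)
    omega
  let c (t : Fin (q + 1)) : Fin n := ⟨r + t * m, Nat.lt_of_succ_lt (hc t)⟩
  let d (t : Fin (q + 1)) : Fin n := ⟨r + t * m + 1, hc t⟩
  refine det_eq_zero_of_mulVec_eq_zero_of_apply_eq_one _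
    (∑ t, (Pi.single (c t) 1 - Pi.single (d t) 1)) ?_ (c 0) ?_
  · ext i
    -- `g t` is the entry in row `i` of the positive part of the `t`-th difference of columns.
    let g (t : ℕ) : R := if (i : ℤ) = r + (t * m : ℕ) - m + l then b - a else 0
    have hg0 : g 0 = 0 := if_neg (by have := i.2; omega)
    have hgq : g (q + 1) = 0 := if_neg (by
      have := i.2
      have : (q + 1) * m = q * m + m := Nat.succ_mul q m
      omega)
    have key : ∑ t : Fin (q + 1), (g t - g (t + 1)) = 0 := by
      rw [Fin.sum_univ_eq_sum_range (fun t => g t - g (t + 1)), Finset.sum_range_sub', hg0, hgq,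
        sub_zero]
    rw [Matrix.mulVec_sum, Finset.sum_apply, Pi.zero_apply, ← key]
    refine Finset.sum_congr rfl fun t _ => ?_
    rw [Matrix.mulVec_sub, Matrix.mulVec_single_one, Matrix.mulVec_single_one]
    simp only [Pi.sub_apply, Matrix.col_apply, Matrix.of_apply, c, d, g, Nat.succ_mul]
    split_ifs <;> first | (exfalso; omega) | ring
  · have hm0 : m ≠ 0 := by omega
    rw [Finset.sum_apply, Finset.sum_eq_single 0]
    · simp [c, d]
    · intro t _ ht
      have h : (t : ℕ) * m ≠ 0 := Nat.mul_ne_zero (Fin.val_ne_zero_iff.mpr ht) hm0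
      have h1 : c 0 ≠ c t := by simp only [c, ne_eq, Fin.ext_iff, Fin.val_zero]; omega
      have h2 : c 0 ≠ d t := by simp only [c, d, ne_eq, Fin.ext_iff, Fin.val_zero]; omega
      simp [h1, h2]
    · simp
end

section
/- Let n ≥ 1 be a natural number. Let A_n be the n×n integer matrix (rows and columns indexed by 0,…,n−1) with entries A i j = 0 if j = i or j = i + 1, and A i j = 1 otherwise (zeros on the main diagonal and the superdiagonal, ones elsewhere). Then det A_n = (−1)^(n−1) · ⌊(n−1)/2⌋; that is, det A_n = (n−1)/2 if n is odd and det A_n = −(n−2)/2 if n is even. -/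
/-!
Let `U` be the upper bidiagonal matrix with ones on the diagonal and the superdiagonal, and let
`J` be the all-ones matrix, so that the matrix in question is `J - U`. The alternating vector
`u = (…, 1, 0, 1)`, with last entry `1`, solves `U u = 1`, whence `J - U = -U (1 - u 1ᵀ)`.
Since `det U = 1`, the matrix determinant lemma gives `det (J - U) = (-1)^n (1 - ∑ u)`, and
`∑ u = ⌈n/2⌉ = ⌊(n-1)/2⌋ + 1`.
-/

/-- The upper bidiagonal matrix with ones on the diagonal and on the superdiagonal. -/
def bidiag (n : ℕ) : Matrix (Fin n) (Fin n) ℤ :=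
  Matrix.of fun i j => if (j : ℕ) = i ∨ (j : ℕ) = i + 1 then 1 else 0

/-- The vector `(…, 0, 1, 0, 1)` of length `n`, the solution of `bidiag n *ᵥ u = 1`. -/
def altVec (n : ℕ) : Fin n → ℤ := fun i => if (n - 1 - (i : ℕ)) % 2 = 0 then 1 else 0

lemma det_bidiag (n : ℕ) : (bidiag n).det = 1 := by
  rw [Matrix.det_of_upperTriangular]
  · simp [bidiag]
  · intro i j hij
    have h : (j : ℕ) < i := hij
    simp only [bidiag, Matrix.of_apply]
    rw [if_neg (by lia)]

lemma bidiag_mulVec_altVec (n : ℕ) : Matrix.mulVec (bidiag n) (altVec n) = 1 := by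
  ext i
  simp only [Matrix.mulVec, dotProduct, bidiag, Matrix.of_apply, ite_mul, one_mul, zero_mul,
    Pi.one_apply]
  by_cases hi : (i : ℕ) + 1 < n
  · rw [Finset.sum_eq_add (a := i) (b := ⟨i + 1, hi⟩)]
    · simp only [altVec, true_or, or_true, if_true]
      split_ifs <;> lia
    · simp [Fin.ext_iff]
    · intro c _ hc
      simp only [ne_eq, Fin.ext_iff] at hc
      rw [if_neg (by lia)]
    · simp
    · simp
  · rw [Finset.sum_eq_single i]
    · simp only [altVec, true_or, if_true]
      rw [if_pos (by lia)]
    · intro c _ hc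
      simp only [ne_eq, Fin.ext_iff] at hc
      rw [if_neg (by lia)]
    · simp

lemma sum_altVec (n : ℕ) : ∑ i, altVec n i = (((n + 1) / 2 : ℕ) : ℤ) := by
  simp only [altVec]
  rw [Fin.sum_univ_eq_sum_range (fun i => if (n - 1 - i) % 2 = 0 then (1 : ℤ) else 0),
    Finset.sum_range_reflect (fun i => if i % 2 = 0 then (1 : ℤ) else 0)]
  induction n with
  | zero => simp
  | succ k ih =>
    rw [Finset.sum_range_succ, ih]
    split_ifs <;> lia

/-- Determinant of the `n × n` (0,1)-matrix with zeros on the main diagonal and the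
superdiagonal and ones elsewhere: it equals `(-1)^(n-1) * ⌊(n-1)/2⌋`. -/
theorem det_menage_variant_matrix (n : ℕ) (hn : 1 ≤ n) :
    (Matrix.of fun i j : Fin n =>
        if (j : ℕ) = (i : ℕ) ∨ (j : ℕ) = (i : ℕ) + 1 then (0 : ℤ) else 1).det
      = (-1 : ℤ) ^ (n - 1) * (((n - 1) / 2 : ℕ) : ℤ) := by
  have key : (Matrix.of fun i j : Fin n =>
        if (j : ℕ) = (i : ℕ) ∨ (j : ℕ) = (i : ℕ) + 1 then (0 : ℤ) else 1)
      = -(bidiag n * (1 + Matrix.replicateCol Unit (-altVec n) *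
          Matrix.replicateRow Unit (1 : Fin n → ℤ))) := by
    rw [Matrix.mul_add, Matrix.mul_one, ← Matrix.mul_assoc, ← Matrix.replicateCol_mulVec,
      Matrix.mulVec_neg, bidiag_mulVec_altVec]
    ext i j
    simp only [bidiag, Matrix.of_apply, Matrix.neg_apply, Matrix.add_apply, Matrix.mul_apply,
      Matrix.replicateCol_apply, Matrix.replicateRow_apply, Finset.univ_unique,
      Finset.sum_singleton, Pi.neg_apply, Pi.one_apply]
    split_ifs <;> simp
  rw [key, Matrix.det_neg, Matrix.det_mul, det_bidiag,
    Matrix.det_one_add_replicateCol_mul_replicateRow, dotProduct_neg, one_dotProduct, sum_altVec,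
    Fintype.card_fin]
  obtain ⟨m, rfl⟩ : ∃ m, n = m + 1 := ⟨n - 1, by lia⟩
  have h : (m + 1 + 1) / 2 = m / 2 + 1 := by lia
  rw [h, Nat.add_sub_cancel, pow_succ]
  push_cast
  ring
end

section
/- Let n ≥ 1 be a natural number. Then the sum of the signs of all permutations σ of Fin n (indices 0,…,n−1) satisfying σ i ≠ i for all i and σ i ≠ i + 1 for all i < n − 1 equals (−1)^(n−1) · ⌊(n−1)/2⌋. Equivalently, the number of even such permutations minus the number of odd such permutations equals (n−1)/2 when n is odd and −(n−2)/2 when n is even. -/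
/-!
The signed count is the determinant of `J - L`, where `J` is the all-ones matrix and `L` has ones on
the diagonal and the subdiagonal, the positions forbidden to `(σ i, i)`. The alternating vector
`x = (1, 0, 1, 0, …)` solves `L x = (1, …, 1)`, so `J - L = L (x 1ᵀ - I)`. As `L` is unipotent, the
rank-one determinant formula gives `det (J - L) = (-1)ⁿ (1 - ∑ xᵢ)`, and `∑ xᵢ = ⌈n/2⌉`.
-/

namespace MenageVariant

open Matrix

/-- The 0/1 matrix of forbidden positions: row `j`, column `i` is `1` when `j ∈ {i, i + 1}`. -/
def forbidden (n : ℕ) : Matrix (Fin n) (Fin n) ℤ :=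
  Matrix.of fun j i => if (j : ℕ) = i ∨ (j : ℕ) = i + 1 then 1 else 0

/-- The alternating vector `(1, 0, 1, 0, …)`. -/
def alt (n : ℕ) : Fin n → ℤ := fun i => if (i : ℕ) % 2 = 0 then 1 else 0

lemma det_forbidden (n : ℕ) : (forbidden n).det = 1 := by
  rw [Matrix.det_of_isLowerTriangular]
  · simp [forbidden]
  · intro j i h
    have h' : (j : ℕ) < i := h
    simp only [forbidden, Matrix.of_apply]
    rw [if_neg (by omega)]

lemma forbidden_mulVec_alt (n : ℕ) (j : Fin n) : ∑ i, forbidden n j i * alt n i = 1 := by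
  obtain ⟨j, hj⟩ := j
  simp only [forbidden, alt, Matrix.of_apply]
  rw [Fin.sum_univ_eq_sum_range
    (fun i => (if j = i ∨ j = i + 1 then (1 : ℤ) else 0) * if i % 2 = 0 then 1 else 0) n]
  rcases j with _ | k
  · rw [Finset.sum_eq_single_of_mem 0 (by simpa using hj)]
    · simp
    · intro i _ hi
      rw [if_neg (by omega), zero_mul]
  · rw [Finset.sum_eq_add_of_mem k (k + 1) (by simp; omega) (by simpa using hj) (by omega)]
    · rcases Nat.mod_two_eq_zero_or_one k with h | h
      · simp [h, show (k + 1) % 2 = 1 by omega]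
      · simp [h, show (k + 1) % 2 = 0 by omega]
    · intro i _ hi
      rw [if_neg (by omega), zero_mul]

lemma sum_alt (n : ℕ) : ∑ i, alt n i = (((n + 1) / 2 : ℕ) : ℤ) := by
  simp only [alt]
  rw [Fin.sum_univ_eq_sum_range (fun i => if i % 2 = 0 then (1 : ℤ) else 0) n]
  induction n with
  | zero => simp
  | succ n ih =>
    rw [Finset.sum_range_succ, ih]
    split_ifs <;> omega

lemma factorization (n : ℕ) :
    (Matrix.of fun _ _ => (1 : ℤ)) - forbidden n =
      forbidden n * -(1 - replicateCol Unit (alt n) * replicateRow Unit (fun _ => (1 : ℤ))) := by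
  have h : forbidden n * (replicateCol Unit (alt n) * replicateRow Unit (fun _ : Fin n => (1 : ℤ))) =
      (Matrix.of fun _ _ => (1 : ℤ) : Matrix (Fin n) (Fin n) ℤ) := by
    ext j i
    rw [Matrix.mul_apply]
    simpa [Matrix.mul_apply] using forbidden_mulVec_alt n j
  rw [neg_sub, mul_sub, h, mul_one]

lemma det_allowed (n : ℕ) :
    ((Matrix.of fun _ _ => (1 : ℤ)) - forbidden n).det
      = (-1) ^ n * (1 - (((n + 1) / 2 : ℕ) : ℤ)) := by
  rw [factorization, Matrix.det_mul, det_forbidden, one_mul, Matrix.det_neg, Fintype.card_fin,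
    Matrix.det_one_sub_mul_comm, ← sum_alt]
  congr 1
  simp [Matrix.mul_apply]

end MenageVariant

/-- The sum of the signs of all permutations `σ` of `Fin n` with `σ i ≠ i` for all `i`
and `σ i ≠ i + 1` for all `i < n - 1` equals `(-1)^(n-1) * ⌊(n-1)/2⌋`. -/
theorem sum_sign_menage_variant_perms (n : ℕ) (hn : 1 ≤ n) :
    ∑ σ ∈ Finset.univ.filter (fun σ : Equiv.Perm (Fin n) =>
        (∀ i, σ i ≠ i) ∧ ∀ i : Fin n, (i : ℕ) < n - 1 → ((σ i : ℕ) ≠ (i : ℕ) + 1)),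
        ((Equiv.Perm.sign σ : ℤˣ) : ℤ)
      = (-1 : ℤ) ^ (n - 1) * (((n - 1) / 2 : ℕ) : ℤ) := by
  have hdet := MenageVariant.det_allowed n
  rw [Matrix.det_apply'] at hdet
  have hrhs : (-1 : ℤ) ^ n * (1 - (((n + 1) / 2 : ℕ) : ℤ))
      = (-1 : ℤ) ^ (n - 1) * (((n - 1) / 2 : ℕ) : ℤ) := by
    obtain ⟨m, rfl⟩ : ∃ m, n = m + 1 := ⟨n - 1, by omega⟩
    rw [show (m + 1 + 1) / 2 = m / 2 + 1 by omega, Nat.add_sub_cancel]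
    push_cast
    ring
  rw [← hrhs, ← hdet, Finset.sum_filter]
  refine Finset.sum_congr rfl fun σ _ => ?_
  have hentry : ∀ i, ((Matrix.of fun _ _ => (1 : ℤ) : Matrix (Fin n) (Fin n) ℤ)
        - MenageVariant.forbidden n) (σ i) i
      = if (σ i : ℕ) = i ∨ (σ i : ℕ) = i + 1 then 0 else 1 := by
    intro i
    simp only [MenageVariant.forbidden, Matrix.sub_apply, Matrix.of_apply]
    split_ifs <;> simp
  simp only [hentry, Int.cast_id]
  split_ifs with h
  · rw [Finset.prod_eq_one, mul_one]
    intro i _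
    have h1 : (σ i : ℕ) ≠ i := fun e => h.1 i (Fin.ext e)
    -- For the last index `i = n - 1`, the value `i + 1` is out of range anyway.
    have h2 : (σ i : ℕ) ≠ i + 1 := fun e => h.2 i (by have := (σ i).isLt; omega) e
    rw [if_neg (by omega)]
  · obtain ⟨i, hi⟩ : ∃ i, (σ i : ℕ) = i ∨ (σ i : ℕ) = i + 1 := by
      by_contra! hc
      exact h ⟨fun i e => (hc i).1 (congrArg Fin.val e), fun i _ => (hc i).2⟩
    symm
    apply mul_eq_zero_of_right
    exact Finset.prod_eq_zero (Finset.mem_univ i) (if_pos hi)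
end

section
/- Let n ≥ 1 be a natural number. Let B_n be the n×n integer matrix (rows and columns indexed by 0,…,n−1) with entries B i j = 0 if |i − j| ≤ 1 and B i j = 1 otherwise (zeros on the main diagonal and the two adjacent diagonals, ones elsewhere). Then det B_n = (3 − n)/3 if n ≡ 0 (mod 3), det B_n = (n − 1)/3 if n ≡ 1 (mod 3), and det B_n = 0 if n ≡ 2 (mod 3). -/
/-!
Write `B = J - T`, where `J` is the all-ones matrix and `T` the tridiagonal matrix of ones.

If `n ≡ 2 (mod 3)`, the vector `(1, -1, 0, 1, -1, 0, …, 1, -1)` is killed by `T` and has entries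
summing to zero, so `B` is singular.

Otherwise there is a 0-1 vector `v`, supported on one residue class modulo `3`, with `T v = 𝟙`:
the class of `1` if `n ≡ 0` and the class of `0` if `n ≡ 1`. Hence `B = -T (1 - v 𝟙ᵀ)` and
`det B = (-1)ⁿ det T (1 - ∑ v)`. The continuant recursion
`det T (n + 2) = det T (n + 1) - det T n` determines `det T`, which has period `6` in `n`.
-/

/-- The `n × n` tridiagonal matrix of ones. -/
def triOnes (n : ℕ) : Matrix (Fin n) (Fin n) ℤ :=
  Matrix.of fun i j => if |(i : ℤ) - (j : ℤ)| ≤ 1 then 1 else 0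

/-- Expansion along the first row, and then of the second minor along its first column. -/
lemma det_triOnes_add_two (n : ℕ) :
    (triOnes (n + 2)).det = (triOnes (n + 1)).det - (triOnes n).det := by
  rw [Matrix.det_succ_row_zero, Fin.sum_univ_succ, Fin.sum_univ_succ, Finset.sum_eq_zero]
  · have h1 : (triOnes (n + 2)).submatrix Fin.succ (Fin.succAbove 0) = triOnes (n + 1) := by
      ext i j
      simp [triOnes]
    have h2 : ((triOnes (n + 2)).submatrix Fin.succ (Fin.succAbove (Fin.succ 0))).det
        = (triOnes n).det := by
      rw [Matrix.det_succ_column_zero, Fin.sum_univ_succ, Finset.sum_eq_zero]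
      · have h3 : ((triOnes (n + 2)).submatrix Fin.succ (Fin.succAbove (Fin.succ 0))).submatrix
            (Fin.succAbove 0) Fin.succ = triOnes n := by
          ext i j
          simp [triOnes]
        rw [h3]
        simp [triOnes]
      · intro i _
        have : ¬ |((i : ℕ) : ℤ) + 1 + 1| ≤ 1 := by
          rw [abs_le]; omega
        simp [triOnes, this]
    rw [h1, h2]
    simp [triOnes]
    ring
  · intro i _
    have : ¬ |(0 : ℤ) - (((i : ℕ) : ℤ) + 1 + 1)| ≤ 1 := by
      rw [abs_le]; omega
    simp only [triOnes, Matrix.of_apply, Fin.val_zero, Fin.val_succ]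
    push_cast
    rw [if_neg this]
    simp

/-- The recursion `d (m + 2) = d (m + 1) - d m` gives `d (m + 3) = -d m`, hence the sign
`(-1) ^ k` from the initial values `d 0 = d 1 = 1`. -/
lemma det_triOnes_three_mul (k : ℕ) :
    (triOnes (3 * k)).det = (-1) ^ k ∧ (triOnes (3 * k + 1)).det = (-1) ^ k := by
  induction k with
  | zero => simp [triOnes]
  | succ k ih =>
    obtain ⟨h0, h1⟩ := ih
    have h2 := det_triOnes_add_two (3 * k)
    have h3 := det_triOnes_add_two (3 * k + 1)
    have h4 := det_triOnes_add_two (3 * k + 2)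
    rw [show 3 * (k + 1) = 3 * k + 1 + 2 by ring]
    rw [show 3 * k + 1 + 2 + 1 = 3 * k + 2 + 2 by ring]
    rw [show 3 * k + 2 + 1 = 3 * k + 1 + 2 by ring] at h4
    rw [show 3 * k + 1 + 1 = 3 * k + 2 by ring] at h3
    rw [pow_succ]
    constructor <;> linarith

/-- The hypothesis `f n = 0` removes the boundary effect in the last row. -/
lemma triOnes_mulVec (n : ℕ) (f : ℕ → ℤ) (hf : f n = 0) (i : Fin n) :
    (triOnes n).mulVec (fun j => f j) i
      = (if (i : ℕ) = 0 then 0 else f (i - 1)) + f i + f (i + 1) := by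
  obtain ⟨i, hi⟩ := i
  have key : ∀ j : ℕ, (if |(i : ℤ) - (j : ℤ)| ≤ 1 then (1 : ℤ) else 0) * f j
      = (if j = i - 1 then (if i = 0 then 0 else f (i - 1)) else 0)
        + (if j = i then f i else 0) + (if j = i + 1 then f (i + 1) else 0) := by
    intro j
    simp only [abs_le]
    by_cases h1 : j = i
    · subst h1
      grind
    by_cases h2 : j = i + 1
    · subst h2
      grind
    grind
  simp only [Matrix.mulVec, dotProduct, triOnes, Matrix.of_apply]
  rw [Fin.sum_univ_eq_sum_range
    (fun j : ℕ => (if |(i : ℤ) - (j : ℤ)| ≤ 1 then (1 : ℤ) else 0) * f j)]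
  simp only [key, Finset.sum_add_distrib, Finset.sum_ite_eq', Finset.mem_range]
  rw [if_pos (by omega : i - 1 < n), if_pos hi]
  by_cases h : i + 1 < n
  · rw [if_pos h]
  · rw [if_neg h, show i + 1 = n by omega, hf]

lemma sub_triOnes_apply (n : ℕ) (i j : Fin n) :
    (if |(i : ℤ) - (j : ℤ)| ≤ 1 then (0 : ℤ) else 1) = 1 - triOnes n i j := by
  simp only [triOnes, Matrix.of_apply]
  split_ifs <;> simp

/-- If `T v = 𝟙`, then `J - T = -T (1 - v 𝟙ᵀ)`, and the matrix determinant lemma applies. -/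
lemma det_of_triOnes_mulVec_eq_one (n : ℕ) (v : Fin n → ℤ)
    (hv : (triOnes n).mulVec v = fun _ => 1) :
    (Matrix.of fun i j : Fin n =>
        if |(i : ℤ) - (j : ℤ)| ≤ 1 then (0 : ℤ) else 1).det
      = (-1) ^ n * (triOnes n).det * (1 - ∑ i, v i) := by
  have hB : (Matrix.of fun i j : Fin n => if |(i : ℤ) - (j : ℤ)| ≤ 1 then (0 : ℤ) else 1)
      = -(triOnes n * (1 + Matrix.replicateCol Unit (-v) *
          Matrix.replicateRow Unit (fun _ : Fin n => (1 : ℤ)))) := by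
    ext i j
    have := congrFun hv i
    simp only [Matrix.mulVec, dotProduct] at this
    rw [Matrix.of_apply, sub_triOnes_apply, Matrix.mul_add, Matrix.mul_one]
    simp [Matrix.mul_apply, this]
    ring
  rw [hB, Matrix.det_neg, Matrix.det_mul, Matrix.det_one_add_replicateCol_mul_replicateRow]
  simp [dotProduct]
  ring

/-- Determinant of the `n × n` (0,1)-matrix with zeros on the main diagonal and its two
neighboring diagonals and ones elsewhere: it equals `(3 - n)/3` if `n ≡ 0 (mod 3)`,
`(n - 1)/3` if `n ≡ 1 (mod 3)`, and `0` if `n ≡ 2 (mod 3)`. -/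
theorem det_menage_rectangular_matrix (n : ℕ) (hn : 1 ≤ n) :
    (Matrix.of fun i j : Fin n =>
        if |(i : ℤ) - (j : ℤ)| ≤ 1 then (0 : ℤ) else 1).det
      = if n % 3 = 0 then (3 - (n : ℤ)) / 3
        else if n % 3 = 1 then ((n : ℤ) - 1) / 3
        else 0 := by
  obtain ⟨k, hk⟩ : ∃ k, k = n / 3 := ⟨_, rfl⟩
  have hsq : ((-1 : ℤ) ^ k) * (-1) ^ k = 1 := by
    rw [← mul_pow]; simp
  have hcube : ((-1 : ℤ) ^ (3 * k)) = (-1) ^ k := by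
    rw [pow_mul]; norm_num
  split_ifs with h0 h1
  · obtain rfl : n = 3 * k := by omega
    rw [det_of_triOnes_mulVec_eq_one _ (fun j => if (j : ℕ) % 3 = 1 then 1 else 0),
      Fin.sum_univ_eq_sum_range (fun m : ℕ => if m % 3 = 1 then (1 : ℤ) else 0),
      (det_triOnes_three_mul k).1]
    · have hs : ∀ k : ℕ, ∑ m ∈ Finset.range (3 * k), (if m % 3 = 1 then (1 : ℤ) else 0) = k := by
        intro k
        induction k with
        | zero => simp
        | succ k ih =>
          rw [show 3 * (k + 1) = 3 * k + 1 + 1 + 1 by ring]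
          simp only [Finset.sum_range_succ, ih]
          grind
      rw [hs, hcube, hsq]
      push_cast
      omega
    · funext i
      rw [triOnes_mulVec _ (fun m : ℕ => if m % 3 = 1 then 1 else 0) (by grind)]
      grind
  · obtain rfl : n = 3 * k + 1 := by omega
    rw [det_of_triOnes_mulVec_eq_one _ (fun j => if (j : ℕ) % 3 = 0 then 1 else 0),
      Fin.sum_univ_eq_sum_range (fun m : ℕ => if m % 3 = 0 then (1 : ℤ) else 0),
      (det_triOnes_three_mul k).2]
    · have hs : ∀ k : ℕ,
          ∑ m ∈ Finset.range (3 * k + 1), (if m % 3 = 0 then (1 : ℤ) else 0) = k + 1 := by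
        intro k
        induction k with
        | zero => rfl
        | succ k ih =>
          rw [show 3 * (k + 1) + 1 = 3 * k + 1 + 1 + 1 + 1 by ring]
          rw [Finset.sum_range_succ, Finset.sum_range_succ, Finset.sum_range_succ, ih]
          grind
      rw [hs, pow_succ, hcube, mul_right_comm _ (-1 : ℤ), hsq]
      push_cast
      omega
    · funext i
      rw [triOnes_mulVec _ (fun m : ℕ => if m % 3 = 0 then 1 else 0) (by grind)]
      grind
  · obtain rfl : n = 3 * k + 2 := by omega
    set f : ℕ → ℤ := fun m => if m % 3 = 0 then 1 else if m % 3 = 1 then -1 else 0 with hf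
    apply Matrix.exists_mulVec_eq_zero_iff.mp
    refine ⟨fun j => f j, fun h => ?_, ?_⟩
    · have := congrFun h ⟨0, by omega⟩
      simp [hf] at this
    · have hs : ∀ k : ℕ, ∑ m ∈ Finset.range (3 * k + 2), f m = 0 := by
        intro k
        induction k with
        | zero => simp [Finset.sum_range_succ, hf]
        | succ k ih =>
          rw [show 3 * (k + 1) + 2 = 3 * k + 2 + 1 + 1 + 1 by ring]
          rw [Finset.sum_range_succ, Finset.sum_range_succ, Finset.sum_range_succ, ih]
          grind
      funext i
      have hT := triOnes_mulVec (3 * k + 2) f (by grind) i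
      have hT0 : (triOnes (3 * k + 2)).mulVec (fun j => f j) i = 0 := by
        rw [hT]
        grind
      simp only [Matrix.mulVec, dotProduct, Matrix.of_apply] at hT0 ⊢
      simp only [sub_triOnes_apply, sub_mul, one_mul, Finset.sum_sub_distrib, hT0]
      rw [Fin.sum_univ_eq_sum_range f, hs]
      simp
end

section
/- Let n ≥ 1 and k be natural numbers with 1 ≤ k ≤ n. Then the sum of the signs of all permutations σ of Fin n having exactly k weak excedances (indices i with σ i ≥ i) equals (−1)^(n−k) · binom(n−1, k−1). Equivalently, the number of even permutations of order n with exactly k weak excedances minus the number of odd permutations of order n with exactly k weak excedances equals (−1)^(n−k) · binom(n−1, k−1). -/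
/-!
Weighting each weak excedance by `X`, the signed generating function `∑ σ, sign σ * X ^ wexc σ` is
the determinant of the matrix with entries `X` on and below the diagonal and `1` above it.
Subtracting from every row its predecessor leaves an upper triangular matrix with diagonal
`X, X - 1, …, X - 1`, so the determinant is `X * (X - 1) ^ (n - 1)`, and the theorem is
the comparison of the coefficients of `X ^ k`.
-/

open Polynomial in
/-- The matrix whose determinant is the signed generating function of weak excedances: `X` on and
below the diagonal, `1` above it. -/
noncomputable def wexcMatrix (n : ℕ) : Matrix (Fin n) (Fin n) ℤ[X] :=
  Matrix.of fun i j => if j ≤ i then X else 1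

open Polynomial in
theorem det_wexcMatrix_eq_sum (n : ℕ) :
    (wexcMatrix n).det = ∑ σ : Equiv.Perm (Fin n),
      C ((Equiv.Perm.sign σ : ℤˣ) : ℤ) *
        X ^ (Finset.univ.filter (fun i : Fin n => i ≤ σ i)).card := by
  rw [Matrix.det_apply']
  refine Finset.sum_congr rfl fun σ _ => ?_
  simp [wexcMatrix, Finset.prod_ite]

open Polynomial in
theorem det_wexcMatrix_succ (m : ℕ) :
    (wexcMatrix (m + 1)).det = X * (X - 1) ^ m := by
  -- `B` is the result of subtracting from each row of `wexcMatrix` the preceding one.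
  let B : Matrix (Fin (m + 1)) (Fin (m + 1)) ℤ[X] :=
    Matrix.of (Fin.cons (wexcMatrix (m + 1) 0)
      fun i j => if j = i.succ then X - 1 else 0)
  have hdet : (wexcMatrix (m + 1)).det = B.det := by
    refine Matrix.det_eq_of_forall_row_eq_smul_add_pred (fun _ => 1) (fun j => by simp [B]) ?_
    intro i j
    simp only [B, wexcMatrix, Matrix.of_apply, Fin.cons_succ, one_mul, Fin.le_def, Fin.ext_iff,
      Fin.val_succ, Fin.val_castSucc]
    split_ifs <;> first | omega | ring
  have hB : B.BlockTriangular id := by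
    intro i j hij
    induction i using Fin.cases with
    | zero => exact absurd hij (Fin.not_lt_zero _)
    | succ i => simp [B, (show j < i.succ from hij).ne]
  rw [hdet, Matrix.det_of_isUpperTriangular hB, Fin.prod_univ_succ]
  simp [B, wexcMatrix]

/-- The sum of the signs of all permutations of `Fin n` with exactly `k` weak
excedances (indices `i` with `σ i ≥ i`) equals `(-1)^(n-k) * (n-1).choose (k-1)`. -/
theorem sum_sign_perms_weak_excedances (n k : ℕ) (hn : 1 ≤ n) (hk : 1 ≤ k)
    (hkn : k ≤ n) :
    ∑ σ ∈ Finset.univ.filter (fun σ : Equiv.Perm (Fin n) =>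
        (Finset.univ.filter (fun i : Fin n => i ≤ σ i)).card = k),
        ((Equiv.Perm.sign σ : ℤˣ) : ℤ)
      = (-1 : ℤ) ^ (n - k) * ((n - 1).choose (k - 1) : ℤ) := by
  obtain ⟨m, rfl⟩ := Nat.exists_eq_add_of_le' hn
  obtain ⟨l, rfl⟩ := Nat.exists_eq_add_of_le' hk
  have h := congrArg (fun p => Polynomial.coeff p (l + 1))
    ((det_wexcMatrix_eq_sum (m + 1)).symm.trans (det_wexcMatrix_succ m))
  simp only [Polynomial.finsetSum_coeff, Polynomial.coeff_C_mul_X_pow,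
    Polynomial.coeff_X_mul] at h
  rw [sub_eq_add_neg, ← Polynomial.C_1, ← Polynomial.C_neg, Polynomial.coeff_X_add_C_pow] at h
  rw [Finset.sum_filter]
  simpa only [eq_comm (a := l + 1), Nat.add_sub_add_right, Nat.add_sub_cancel] using h
end
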